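/- arXiv:2410.08011 — 6 statements merged into one kernel-verified Lean document; each statement's English description precedes it below -/
import Mathlib

section
/- Let τ ∈ S_n, let s_k be a simple transposition (1 ≤ k ≤ n−1), let X ∈ ℂ^n, and set T(R) = T_τ(X) and T(W) = T_{s_k∘τ}(s_k·X). Then Σ_i(W) = Σ_i(R) for every row index i with 1 ≤ i ≤ n and i ≠ k. -/
/-- The orientation function `A_σ` of the graph `G_σ`:
`A_σ(r,s) = 1` if `σ⁻¹(r) > σ⁻¹(s)` and `A_σ(r,s) = -1` otherwise. -/
def Aperm (σ : Equiv.Perm ℕ) (r s : ℕ) : ℤ :=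
  if σ.symm s < σ.symm r then 1 else -1

/-- The Gelfand–Tsetlin tableau `T_σ(X)`: `tab n σ x k i` is the entry `y_{k,i}` in
row `k`, column `i`; row `n` is `x` and `y_{k-1,i} = y_{k,i} + (1 - A_σ(k,i))/2`. -/
noncomputable def tab (n : ℕ) (σ : Equiv.Perm ℕ) (x : ℕ → ℂ) (k i : ℕ) : ℂ :=
  if h : n ≤ k then x i
  else tab n σ x (k + 1) i + (1 - (Aperm σ (k + 1) i : ℂ)) / 2
termination_by n - k
decreasing_by omega

/-- `Σ_t`: the sum of the entries in row `t` of the tableau `T_σ(X)`. -/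
noncomputable def rowSum (n : ℕ) (σ : Equiv.Perm ℕ) (x : ℕ → ℂ) (t : ℕ) : ℂ :=
  ∑ i ∈ Finset.Icc 1 t, tab n σ x t i

/-!
Unrolling the recursion, `y_{t,i}` is `x_i` plus a sum over the rows `t < r ≤ n` of terms that
depend only on the relative order of `σ⁻¹ r` and `σ⁻¹ i`. Replacing `σ` by `π ∘ σ` and `X` by
`π · X` therefore amounts to relabelling `i` and `r` by `π`, so it permutes the entries of row `t`
as soon as `π` preserves both `{1, …, t}` and `{t + 1, …, n}`. The transposition `s_k` does so for
`t ≠ k`.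
-/

theorem Aperm_mul_apply (π σ : Equiv.Perm ℕ) (r s : ℕ) :
    Aperm (π * σ) (π r) (π s) = Aperm σ r s := by
  simp only [Aperm, Equiv.Perm.mul_def, Equiv.symm_trans_apply, Equiv.symm_apply_apply]

theorem tab_eq_add_sum (n : ℕ) (σ : Equiv.Perm ℕ) (x : ℕ → ℂ) (t i : ℕ) :
    tab n σ x t i = x i + ∑ r ∈ Finset.Ioc t n, (1 - (Aperm σ r i : ℂ)) / 2 := by
  fun_induction tab n σ x t i with
  | case1 t hnt => rw [Finset.Ioc_eq_empty_of_le hnt, Finset.sum_empty, add_zero]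
  | case2 t hnt ih =>
    rw [ih, ← Finset.insert_Ioc_add_one_left_eq_Ioc (not_le.mp hnt), Finset.sum_insert (by simp)]
    ring

theorem tab_mul_apply {n t : ℕ} {π : Equiv.Perm ℕ}
    (hπ : ∀ r, r ∈ Finset.Ioc t n ↔ π r ∈ Finset.Ioc t n)
    (σ : Equiv.Perm ℕ) (x : ℕ → ℂ) (i : ℕ) :
    tab n (π * σ) (fun j => x (π.symm j)) t (π i) = tab n σ x t i := by
  rw [tab_eq_add_sum, tab_eq_add_sum, Equiv.symm_apply_apply]
  congr 1
  exact (Finset.sum_equiv π hπ fun r _ => by rw [Aperm_mul_apply]).symm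

theorem mem_Icc_iff_swap_mem_Icc {k a b : ℕ} (ha : a ≠ k + 1) (hb : b ≠ k) (i : ℕ) :
    i ∈ Finset.Icc a b ↔ Equiv.swap k (k + 1) i ∈ Finset.Icc a b := by
  rw [Finset.mem_Icc, Finset.mem_Icc, Equiv.swap_apply_def]
  split_ifs <;> omega

theorem mem_Ioc_iff_swap_mem_Ioc {k a b : ℕ} (ha : a ≠ k) (hb : b ≠ k) (i : ℕ) :
    i ∈ Finset.Ioc a b ↔ Equiv.swap k (k + 1) i ∈ Finset.Ioc a b := by
  rw [← Finset.Icc_add_one_left_eq_Ioc]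
  exact mem_Icc_iff_swap_mem_Icc (by omega) hb i

theorem stmt7_general {n t : ℕ} {π : Equiv.Perm ℕ}
    (hπ_le : ∀ i, i ∈ Finset.Icc 1 t ↔ π i ∈ Finset.Icc 1 t)
    (hπ_gt : ∀ r, r ∈ Finset.Ioc t n ↔ π r ∈ Finset.Ioc t n)
    (τ : Equiv.Perm ℕ) (x : ℕ → ℂ) :
    rowSum n (π * τ) (fun j => x (π.symm j)) t = rowSum n τ x t :=
  (Finset.sum_equiv π hπ_le fun i _ => (tab_mul_apply hπ_gt τ x i).symm).symm

/-- with `T(R) = T_τ(X)` and `T(W) = T_{s_k ∘ τ}(s_k · X)`, the row sums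
satisfy `Σ_i(W) = Σ_i(R)` for `1 ≤ i ≤ n`, `i ≠ k`. -/
theorem stmt7 (n : ℕ) (hn : 2 ≤ n) (τ : Equiv.Perm ℕ)
    (hτ : ∀ i ∉ Set.Icc 1 n, τ i = i) (k : ℕ) (hk1 : 1 ≤ k) (hk2 : k ≤ n - 1)
    (x : ℕ → ℂ) :
    ∀ i : ℕ, 1 ≤ i → i ≤ n → i ≠ k →
      rowSum n (Equiv.swap k (k + 1) * τ) (fun j => x (Equiv.swap k (k + 1) j)) i =
        rowSum n τ x i := by
  intro t _ _ htk
  exact stmt7_general (mem_Icc_iff_swap_mem_Icc (by omega) htk)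
    (mem_Ioc_iff_swap_mem_Ioc htk (by omega)) τ x
end

section
/- Let τ ∈ S_n, let s_k be a simple transposition (1 ≤ k ≤ n−1), let X ∈ ℂ^n, and set T(R) = T_τ(X) and T(W) = T_{s_k∘τ}(s_k·X). Then Σ_k(W) = Σ_k(R) + r_{n,k+1} − r_{n,k} + τ^{-1}(k+1) − τ^{-1}(k), where the integers τ^{-1}(k+1), τ^{-1}(k) ∈ {1,…,n} are viewed in ℂ. -/
/-!
Row sums have a closed form: `Σ_t = ∑ i ≤ t, (x_i + σ⁻¹(i) - i)`. Unfolding the recursion, `y_{t,t}`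
exceeds `x_t` by the number of `r > t` with `σ⁻¹(r) < σ⁻¹(t)`, while passing from row `t` to row
`t - 1` adds `1` to `y_{t,i}` for each `i < t` with `σ⁻¹(i) > σ⁻¹(t)`. Hence `Σ_t - Σ_{t-1}` is
`x_t - (t - 1)` plus the number of all `r` with `σ⁻¹(r) < σ⁻¹(t)`, and that number is `σ⁻¹(t) - 1`.
Replacing `σ` by `s_k ∘ σ` and `X` by `s_k · X` precomposes `i ↦ x_i + σ⁻¹(i)` with `s_k`, so in
`Σ_k` only the summand at `i = k` changes: it becomes the one at `k + 1`.
-/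

section RowSum

open Finset

variable {α : Type*}

theorem sum_comp_swap_of_mem_of_notMem {M : Type*} [DecidableEq α] [AddCommGroup M]
    {s : Finset α} {a b : α} (ha : a ∈ s) (hb : b ∉ s) (f : α → M) :
    ∑ i ∈ s, f (Equiv.swap a b i) = ∑ i ∈ s, f i + (f b - f a) := by
  have support_subset : {i | Equiv.swap a b i ≠ i} ⊆ (insert b s : Finset α) := by
    intro i hi
    obtain rfl | rfl := (Equiv.swap_apply_ne_self_iff.1 hi).2
    exacts [mem_insert_of_mem ha, mem_insert_self _ _]
  have sum_insert_eq := (Equiv.swap a b).sum_comp (insert b s) f support_subset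
  rw [sum_insert hb, sum_insert hb, Equiv.swap_apply_right] at sum_insert_eq
  rw [← sub_eq_zero, ← sub_eq_zero.2 sum_insert_eq]
  abel

theorem swap_mul_apply_of_notMem [DecidableEq α] {s : Set α} {σ : Equiv.Perm α}
    (hσ : ∀ i ∉ s, σ i = i) {a b : α} (ha : a ∈ s) (hb : b ∈ s) :
    ∀ i ∉ s, (Equiv.swap a b * σ) i = i := by
  intro i hi
  rw [Equiv.Perm.mul_apply, hσ i hi]
  exact Equiv.swap_apply_of_ne_of_ne (ne_of_mem_of_not_mem ha hi).symm
    (ne_of_mem_of_not_mem hb hi).symm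

theorem symm_apply_mem_of_forall_notMem {s : Set α} {σ : Equiv.Perm α} (hσ : ∀ i ∉ s, σ i = i)
    {a : α} (ha : a ∈ s) : σ.symm a ∈ s := by
  by_contra h
  have fixed : a = σ.symm a := by simpa only [Equiv.apply_symm_apply] using hσ _ h
  exact h (fixed ▸ ha)

variable {n k : ℕ} {σ : Equiv.Perm ℕ}

theorem card_filter_symm_lt_add_one (hσ : ∀ i ∉ Set.Icc 1 n, σ i = i) (hk : k ∈ Set.Icc 1 n) :
    #{r ∈ Icc 1 n | σ.symm r < σ.symm k} + 1 = σ.symm k := by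
  obtain ⟨one_le, le_n⟩ := symm_apply_mem_of_forall_notMem hσ hk
  have support_subset : {i | σ.symm i ≠ i} ⊆ (Icc 1 n : Finset ℕ) := by
    intro i hi
    by_contra hin
    exact hi (σ.symm_apply_eq.2 (hσ i (by simpa using hin)).symm)
  calc #{r ∈ Icc 1 n | σ.symm r < σ.symm k} + 1
      = #{j ∈ Icc 1 n | j < σ.symm k} + 1 := by
        rw [card_filter, card_filter,
          Equiv.Perm.sum_comp σ.symm _ (fun j ↦ if j < σ.symm k then 1 else 0) support_subset]
    _ = #(Ico 1 (σ.symm k)) + 1 := by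
        congr 2
        ext j
        simp only [mem_filter, mem_Icc, mem_Ico]
        lia
    _ = σ.symm k := by rw [Nat.card_Ico, Nat.sub_add_cancel one_le]

theorem one_sub_Aperm_div_two (σ : Equiv.Perm ℕ) (r s : ℕ) :
    (1 - (Aperm σ r s : ℂ)) / 2 = if σ.symm r ≤ σ.symm s then 1 else 0 := by
  unfold Aperm
  split_ifs <;> first | lia | norm_num

theorem tab_of_le (h : n ≤ k) (x : ℕ → ℂ) (i : ℕ) : tab n σ x k i = x i := by
  rw [tab, dif_pos h]

theorem tab_of_lt (h : k < n) (x : ℕ → ℂ) (i : ℕ) :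
    tab n σ x k i =
      tab n σ x (k + 1) i + if σ.symm (k + 1) ≤ σ.symm i then 1 else 0 := by
  rw [tab, dif_neg h.not_ge, one_sub_Aperm_div_two]

theorem tab_eq_add_card (n : ℕ) (σ : Equiv.Perm ℕ) (x : ℕ → ℂ) (k i : ℕ) :
    tab n σ x k i = x i + #{r ∈ Ioc k n | σ.symm r ≤ σ.symm i} := by
  induction k using tab.induct n with
  | case1 k h => simp [tab_of_le h, Ioc_eq_empty_of_le h]
  | case2 k h ih =>
    rw [tab_of_lt (not_le.1 h), ih, ← insert_Ioc_add_one_left_eq_Ioc (not_le.1 h), filter_insert]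
    split_ifs
    · rw [card_insert_of_notMem (by simp)]
      push_cast
      ring
    · rw [add_zero]

theorem card_filter_Icc_add_card_filter_Ioc (hk : k + 1 ≤ n) (σ : Equiv.Perm ℕ) :
    #{i ∈ Icc 1 k | σ.symm i < σ.symm (k + 1)} +
        #{r ∈ Ioc (k + 1) n | σ.symm r ≤ σ.symm (k + 1)} =
      #{r ∈ Icc 1 n | σ.symm r < σ.symm (k + 1)} := by
  rw [← card_union_of_disjoint]
  · congr 1
    ext r
    have ne_of_ne : r ≠ k + 1 → σ.symm r ≠ σ.symm (k + 1) := σ.symm.injective.ne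
    have eq_of_eq : r = k + 1 → σ.symm r = σ.symm (k + 1) := congrArg σ.symm
    simp only [mem_union, mem_filter, mem_Icc, mem_Ioc]
    lia
  · refine disjoint_filter_filter (disjoint_left.2 fun r ↦ ?_)
    simp only [mem_Icc, mem_Ioc]
    lia

theorem rowSum_succ (hσ : ∀ i ∉ Set.Icc 1 n, σ i = i) (hk : k + 1 ≤ n) (x : ℕ → ℂ) :
    rowSum n σ x (k + 1) =
      rowSum n σ x k + (x (k + 1) + σ.symm (k + 1) - (k + 1 : ℕ)) := by
  have card_compl : (#{i ∈ Icc 1 k | σ.symm i < σ.symm (k + 1)} +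
      #{i ∈ Icc 1 k | σ.symm (k + 1) ≤ σ.symm i} : ℂ) = k := by
    simpa using congrArg (Nat.cast (R := ℂ))
      (card_filter_add_card_filter_not (s := Icc 1 k) fun i ↦ σ.symm i < σ.symm (k + 1))
  have rank : (#{i ∈ Icc 1 k | σ.symm i < σ.symm (k + 1)} +
      #{r ∈ Ioc (k + 1) n | σ.symm r ≤ σ.symm (k + 1)} + 1 : ℂ) = σ.symm (k + 1) := by
    exact_mod_cast (congrArg (· + 1) (card_filter_Icc_add_card_filter_Ioc hk σ)).trans
      (card_filter_symm_lt_add_one hσ ⟨k.succ_pos, hk⟩)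
  have row_k : rowSum n σ x k = ∑ i ∈ Icc 1 k, tab n σ x (k + 1) i +
      #{i ∈ Icc 1 k | σ.symm (k + 1) ≤ σ.symm i} := by
    simp only [rowSum, tab_of_lt hk, sum_add_distrib, sum_boole]
  rw [row_k, rowSum, sum_Icc_succ_top k.succ_pos, tab_eq_add_card n σ x (k + 1) (k + 1)]
  push_cast
  linear_combination rank - card_compl

theorem rowSum_eq_sum (hσ : ∀ i ∉ Set.Icc 1 n, σ i = i) (hk : k ≤ n) (x : ℕ → ℂ) :
    rowSum n σ x k = ∑ i ∈ Icc 1 k, (x i + σ.symm i - i) := by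
  induction k with
  | zero => simp [rowSum]
  | succ k ih => rw [rowSum_succ hσ hk, ih (Nat.le_of_succ_le hk), sum_Icc_succ_top k.succ_pos]

theorem stmt8_general (hσ : ∀ i ∉ Set.Icc 1 n, σ i = i) {a b t : ℕ} (ha : a ∈ Set.Icc 1 t)
    (hb : b ∈ Set.Ioc t n) (x : ℕ → ℂ) :
    rowSum n (Equiv.swap a b * σ) (fun j ↦ x (Equiv.swap a b j)) t =
      rowSum n σ x t + tab n σ x n b - tab n σ x n a + ((σ.symm b : ℂ) - (σ.symm a : ℂ)) := by
  obtain ⟨⟨one_le_a, a_le_t⟩, t_lt_b, b_le_n⟩ := And.intro ha hb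
  have t_le_n : t ≤ n := t_lt_b.le.trans b_le_n
  have swap_mul_fixes := swap_mul_apply_of_notMem hσ (a := a) (b := b)
    ⟨one_le_a, a_le_t.trans t_le_n⟩ ⟨one_le_a.trans (a_le_t.trans t_lt_b.le), b_le_n⟩
  have sum_swap := sum_comp_swap_of_mem_of_notMem (mem_Icc.2 ha)
    (fun h : b ∈ Icc 1 t ↦ t_lt_b.not_ge (mem_Icc.1 h).2) fun i ↦ x i + (σ.symm i : ℂ)
  have symm_swap_mul (i : ℕ) : (Equiv.swap a b * σ).symm i = σ.symm (Equiv.swap a b i) := rfl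
  rw [rowSum_eq_sum swap_mul_fixes t_le_n, rowSum_eq_sum hσ t_le_n, sum_sub_distrib,
    sum_sub_distrib, tab_of_le le_rfl, tab_of_le le_rfl]
  simp only [symm_swap_mul]
  linear_combination sum_swap

end RowSum

/-- with `T(R) = T_τ(X)` and `T(W) = T_{s_k ∘ τ}(s_k · X)`,
`Σ_k(W) = Σ_k(R) + r_{n,k+1} - r_{n,k} + τ⁻¹(k+1) - τ⁻¹(k)`. -/
theorem stmt8 (n : ℕ) (hn : 2 ≤ n) (τ : Equiv.Perm ℕ)
    (hτ : ∀ i ∉ Set.Icc 1 n, τ i = i) (k : ℕ) (hk1 : 1 ≤ k) (hk2 : k ≤ n - 1)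
    (x : ℕ → ℂ) :
    rowSum n (Equiv.swap k (k + 1) * τ) (fun j => x (Equiv.swap k (k + 1) j)) k =
      rowSum n τ x k + tab n τ x n (k + 1) - tab n τ x n k +
        ((τ.symm (k + 1) : ℂ) - (τ.symm k : ℂ)) :=
  stmt8_general hτ ⟨hk1, le_rfl⟩ ⟨k.lt_succ_self, by lia⟩ x
end

section
/- Let σ ∈ S_n, X ∈ ℂ^n, and T(L) = T_σ(X). Let 1 ≤ r < s ≤ n with A_σ(s,r) = −1, and let i_r, i_{r+1}, …, i_{s−1} be integers with 1 ≤ i_t ≤ t for each r ≤ t ≤ s−1. Then the array L' obtained from T_σ(X) by subtracting 1 from each entry (t, i_t) for r ≤ t ≤ s−1 does not satisfy the graph G_σ; that is, there exist 1 ≤ i < k ≤ n such that either A_σ(k,i) = 1 and l'_{k,i} − l'_{k−1,i} ∉ ℤ_{≥0}, or A_σ(k,i) = −1 and l'_{k−1,i} − l'_{k,i} ∉ ℤ_{>0}. -/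
/-- The array obtained from `T_σ(X)` by adding `ε` to the entry `(t, idx t)` for each
`r ≤ t ≤ s - 1`. -/
noncomputable def shiftedTab (n : ℕ) (σ : Equiv.Perm ℕ) (x : ℕ → ℂ) (r s : ℕ)
    (idx : ℕ → ℕ) (ε : ℂ) (k i : ℕ) : ℂ :=
  tab n σ x k i + if r ≤ k ∧ k ≤ s - 1 ∧ i = idx k then ε else 0

/-!
Every relation of `G_σ` is tight on `T_σ(X)`: the differences are `0` along edges with `A_σ = 1` and
`1` along edges with `A_σ = -1`. Hence adding `ε ∉ ℕ` (here `ε = -1`) to the entries `(t, i_t)` is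
compatible with `G_σ` only if, for every column `i`,
* a run of shifted entries starting in row `k > i` has `σ⁻¹(k) ≤ σ⁻¹(i)`;
* a run of shifted entries ending in row `k - 1` has `σ⁻¹(i) < σ⁻¹(k)`.

At a change of column from row `t` to row `t + 1` the two combine to
`σ⁻¹(i_t) < σ⁻¹(t + 1) ≤ σ⁻¹(i_{t+1})`, so
`σ⁻¹(r) ≤ σ⁻¹(i_r) ≤ ⋯ ≤ σ⁻¹(i_{s-1}) < σ⁻¹(s)`, that is, `A_σ(s,r) = 1`.
-/

theorem neg_one_ne_natCast {R : Type*} [AddGroupWithOne R] [CharZero R] (m : ℕ) :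
    (-1 : R) ≠ m := by
  have : (-1 : ℤ) ≠ m := by lia
  exact_mod_cast this

theorem Aperm_eq_one_iff {σ : Equiv.Perm ℕ} {k i : ℕ} :
    Aperm σ k i = 1 ↔ σ.symm i < σ.symm k := by
  simp [Aperm]

theorem Aperm_eq_neg_one_iff {σ : Equiv.Perm ℕ} {k i : ℕ} :
    Aperm σ k i = -1 ↔ σ.symm k ≤ σ.symm i := by
  simp [Aperm]

/-- The array `l` satisfies the graph `G_σ`: `l k i` is the entry `l_{k,i}`, and only the entries
with `1 ≤ i ≤ k ≤ n` matter. -/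
def SatisfiesGraph (n : ℕ) (σ : Equiv.Perm ℕ) (l : ℕ → ℕ → ℂ) : Prop :=
  ∀ i k : ℕ, 1 ≤ i → i < k → k ≤ n →
    (Aperm σ k i = 1 → ∃ m : ℕ, l k i - l (k - 1) i = m) ∧
    (Aperm σ k i = -1 → ∃ m : ℕ, l (k - 1) i - l k i = m + 1)

theorem not_satisfiesGraph_iff {n : ℕ} {σ : Equiv.Perm ℕ} {l : ℕ → ℕ → ℂ} :
    ¬SatisfiesGraph n σ l ↔ ∃ i k : ℕ, 1 ≤ i ∧ i < k ∧ k ≤ n ∧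
      ((Aperm σ k i = 1 ∧ ¬∃ m : ℕ, l k i - l (k - 1) i = m) ∨
       (Aperm σ k i = -1 ∧ ¬∃ m : ℕ, l (k - 1) i - l k i = m + 1)) := by
  simp only [SatisfiesGraph, not_forall, not_and_or, exists_prop]

section Tableau

variable {n : ℕ} {σ : Equiv.Perm ℕ} {x : ℕ → ℂ} {k i : ℕ}

theorem tab_pred (hk : 1 ≤ k) (hkn : k ≤ n) :
    tab n σ x (k - 1) i = tab n σ x k i + (1 - (Aperm σ k i : ℂ)) / 2 := by
  rw [tab, dif_neg (by lia), Nat.sub_add_cancel hk]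

theorem tab_pred_of_Aperm_eq_one (hk : 1 ≤ k) (hkn : k ≤ n) (hA : Aperm σ k i = 1) :
    tab n σ x (k - 1) i = tab n σ x k i := by
  rw [tab_pred hk hkn, hA]
  norm_num

theorem tab_pred_of_Aperm_eq_neg_one (hk : 1 ≤ k) (hkn : k ≤ n) (hA : Aperm σ k i = -1) :
    tab n σ x (k - 1) i = tab n σ x k i + 1 := by
  rw [tab_pred hk hkn, hA]
  norm_num

end Tableau

/-- The entry `(k, i)` is one of the entries `(t, idx t)`, `r ≤ t ≤ s - 1`, changed in
`shiftedTab`. -/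
def IsShifted (r s : ℕ) (idx : ℕ → ℕ) (k i : ℕ) : Prop :=
  r ≤ k ∧ k ≤ s - 1 ∧ i = idx k

section Shift

variable {n : ℕ} {σ : Equiv.Perm ℕ} {x : ℕ → ℂ} {r s : ℕ} {idx : ℕ → ℕ} {ε : ℂ} {k i t : ℕ}

theorem isShifted_idx (hrt : r ≤ t) (hts : t ≤ s - 1) : IsShifted r s idx t (idx t) :=
  ⟨hrt, hts, rfl⟩

theorem shiftedTab_of_isShifted (h : IsShifted r s idx k i) :
    shiftedTab n σ x r s idx ε k i = tab n σ x k i + ε := by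
  rw [IsShifted] at h
  rw [shiftedTab, if_pos h]

theorem shiftedTab_of_not_isShifted (h : ¬IsShifted r s idx k i) :
    shiftedTab n σ x r s idx ε k i = tab n σ x k i := by
  rw [IsShifted] at h
  rw [shiftedTab, if_neg h, add_zero]

namespace SatisfiesGraph

theorem symm_row_le_symm_of_not_isShifted_pred
    (h : SatisfiesGraph n σ (shiftedTab n σ x r s idx ε)) (hε : ∀ m : ℕ, ε ≠ m)
    (hi : 1 ≤ i) (hik : i ≤ k) (hkn : k ≤ n)
    (hk : IsShifted r s idx k i) (hpred : ¬IsShifted r s idx (k - 1) i) :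
    σ.symm k ≤ σ.symm i := by
  obtain rfl | hlt := hik.eq_or_lt
  · rfl
  by_contra! hsymm
  have hA : Aperm σ k i = 1 := Aperm_eq_one_iff.mpr hsymm
  obtain ⟨m, hm⟩ := (h i k hi hlt hkn).1 hA
  rw [shiftedTab_of_isShifted hk, shiftedTab_of_not_isShifted hpred,
    tab_pred_of_Aperm_eq_one (hi.trans hik) hkn hA, add_sub_cancel_left] at hm
  exact hε m hm

theorem symm_lt_symm_row_of_isShifted_pred
    (h : SatisfiesGraph n σ (shiftedTab n σ x r s idx ε)) (hε : ∀ m : ℕ, ε ≠ m)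
    (hi : 1 ≤ i) (hik : i < k) (hkn : k ≤ n)
    (hpred : IsShifted r s idx (k - 1) i) (hk : ¬IsShifted r s idx k i) :
    σ.symm i < σ.symm k := by
  by_contra! hsymm
  have hA : Aperm σ k i = -1 := Aperm_eq_neg_one_iff.mpr hsymm
  obtain ⟨m, hm⟩ := (h i k hi hik hkn).2 hA
  rw [shiftedTab_of_isShifted hpred, shiftedTab_of_not_isShifted hk,
    tab_pred_of_Aperm_eq_neg_one (hi.trans hik.le) hkn hA] at hm
  exact hε m (by linear_combination hm)

theorem symm_le_symm_idx_self
    (h : SatisfiesGraph n σ (shiftedTab n σ x r s idx ε)) (hε : ∀ m : ℕ, ε ≠ m)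
    (hrs : r < s) (hrn : r ≤ n) (hidx : 1 ≤ idx r ∧ idx r ≤ r) :
    σ.symm r ≤ σ.symm (idx r) := by
  have hpred : ¬IsShifted r s idx (r - 1) (idx r) := fun hp ↦ by
    have := hp.1
    lia
  exact h.symm_row_le_symm_of_not_isShifted_pred hε hidx.1 hidx.2 hrn
    (isShifted_idx le_rfl (by lia)) hpred

theorem symm_idx_le_symm_idx_succ
    (h : SatisfiesGraph n σ (shiftedTab n σ x r s idx ε)) (hε : ∀ m : ℕ, ε ≠ m)
    (hrt : r ≤ t) (hts : t + 1 ≤ s - 1) (htn : t + 1 ≤ n) (hidx : 1 ≤ idx t ∧ idx t ≤ t)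
    (hidx_succ : 1 ≤ idx (t + 1) ∧ idx (t + 1) ≤ t + 1) :
    σ.symm (idx t) ≤ σ.symm (idx (t + 1)) := by
  obtain heq | hne := eq_or_ne (idx t) (idx (t + 1))
  · rw [heq]
  have hleave : σ.symm (idx t) < σ.symm (t + 1) :=
    h.symm_lt_symm_row_of_isShifted_pred hε hidx.1 (by lia) htn
      (isShifted_idx hrt (by lia)) fun hp ↦ hne hp.2.2
  have henter : σ.symm (t + 1) ≤ σ.symm (idx (t + 1)) :=
    h.symm_row_le_symm_of_not_isShifted_pred hε hidx_succ.1 hidx_succ.2 htn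
      (isShifted_idx (by lia) hts) fun hp ↦ hne hp.2.2.symm
  exact hleave.le.trans henter

theorem symm_idx_pred_lt_symm
    (h : SatisfiesGraph n σ (shiftedTab n σ x r s idx ε)) (hε : ∀ m : ℕ, ε ≠ m)
    (hrs : r < s) (hsn : s ≤ n) (hidx : 1 ≤ idx (s - 1) ∧ idx (s - 1) ≤ s - 1) :
    σ.symm (idx (s - 1)) < σ.symm s := by
  have hend : ¬IsShifted r s idx s (idx (s - 1)) := fun hp ↦ by
    have := hp.2.1
    lia
  exact h.symm_lt_symm_row_of_isShifted_pred hε hidx.1 (by lia) hsn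
    (isShifted_idx (by lia) le_rfl) hend

theorem symm_le_symm_idx
    (h : SatisfiesGraph n σ (shiftedTab n σ x r s idx ε)) (hε : ∀ m : ℕ, ε ≠ m) (hsn : s ≤ n)
    (hidx : ∀ t, r ≤ t → t ≤ s - 1 → 1 ≤ idx t ∧ idx t ≤ t) (hrt : r ≤ t) (hts : t < s) :
    σ.symm r ≤ σ.symm (idx t) := by
  induction t, hrt using Nat.le_induction with
  | base => exact h.symm_le_symm_idx_self hε hts (by lia) (hidx r le_rfl (by lia))
  | succ t hrt ih =>
    exact (ih (by lia)).trans <| h.symm_idx_le_symm_idx_succ hε hrt (by lia) (by lia)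
      (hidx t hrt (by lia)) (hidx (t + 1) (by lia) (by lia))

end SatisfiesGraph

end Shift

theorem stmt10_general {n : ℕ} {σ : Equiv.Perm ℕ} {x : ℕ → ℂ} {r s : ℕ} (hrs : r < s) (hs : s ≤ n)
    (hA : Aperm σ s r = -1) {idx : ℕ → ℕ}
    (hidx : ∀ t : ℕ, r ≤ t → t ≤ s - 1 → 1 ≤ idx t ∧ idx t ≤ t)
    {ε : ℂ} (hε : ∀ m : ℕ, ε ≠ m) :
    ¬SatisfiesGraph n σ (shiftedTab n σ x r s idx ε) := by
  intro h
  have hlt : σ.symm r < σ.symm s := calc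
    σ.symm r ≤ σ.symm (idx (s - 1)) := h.symm_le_symm_idx hε hs hidx (by lia) (by lia)
    _ < σ.symm s := h.symm_idx_pred_lt_symm hε hrs hs (hidx (s - 1) (by lia) le_rfl)
  exact hlt.not_ge (Aperm_eq_neg_one_iff.mp hA)

/-- if `A_σ(s,r) = -1`, the tableau obtained from `T_σ(X)` by subtracting
`1` from the entries `(t, i_t)`, `r ≤ t ≤ s-1`, does not satisfy `G_σ`. -/
theorem stmt10 (n : ℕ) (hn : 2 ≤ n) (σ : Equiv.Perm ℕ)
    (hσ : ∀ i ∉ Set.Icc 1 n, σ i = i) (x : ℕ → ℂ) (r s : ℕ)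
    (hr : 1 ≤ r) (hrs : r < s) (hs : s ≤ n) (hA : Aperm σ s r = -1)
    (idx : ℕ → ℕ) (hidx : ∀ t : ℕ, r ≤ t → t ≤ s - 1 → 1 ≤ idx t ∧ idx t ≤ t) :
    ∃ i k : ℕ, 1 ≤ i ∧ i < k ∧ k ≤ n ∧
      ((Aperm σ k i = 1 ∧
          ¬∃ m : ℕ, shiftedTab n σ x r s idx (-1) k i -
              shiftedTab n σ x r s idx (-1) (k - 1) i = (m : ℂ)) ∨
       (Aperm σ k i = -1 ∧
          ¬∃ m : ℕ, shiftedTab n σ x r s idx (-1) (k - 1) i -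
              shiftedTab n σ x r s idx (-1) k i = (m : ℂ) + 1)) :=
  not_satisfiesGraph_iff.mp (stmt10_general hrs hs hA hidx neg_one_ne_natCast)
end

section
/- Let σ ∈ S_n and 1 ≤ k ≤ n−1. (i) If A_σ(k+1,k) = 1, then: (a) for 1 ≤ ℓ < k, A_σ(k+1,ℓ) ≠ A_σ(k,ℓ) if and only if σ^{-1}(k) < σ^{-1}(ℓ) < σ^{-1}(k+1); and (b) for k+2 ≤ ℓ ≤ n, A_σ(ℓ,k) ≠ A_σ(ℓ,k+1) if and only if σ^{-1}(k) < σ^{-1}(ℓ) < σ^{-1}(k+1). (ii) If A_σ(k+1,k) = −1, then: (a) for 1 ≤ ℓ < k, A_σ(k+1,ℓ) ≠ A_σ(k,ℓ) if and only if σ^{-1}(k+1) < σ^{-1}(ℓ) < σ^{-1}(k); and (b) for k+2 ≤ ℓ ≤ n, A_σ(ℓ,k) ≠ A_σ(ℓ,k+1) if and only if σ^{-1}(k+1) < σ^{-1}(ℓ) < σ^{-1}(k). -/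
/-!
Everything follows from one remark on linear orders: if `a ≤ b`, then `c` compares differently with
`a` and with `b` exactly when `c` lies between them, one endpoint included. It is applied to the
positions `σ⁻¹(k)` and `σ⁻¹(k+1)`, whose order is what the sign of `A_σ(k+1,k)` records; the
endpoint is excluded because `σ⁻¹` is injective.
-/

section LinearOrder

variable {α : Type*} [LinearOrder α] {a b c : α}

theorem not_lt_iff_lt_iff_mem_Ico (hab : a ≤ b) : ¬(c < b ↔ c < a) ↔ c ∈ Set.Ico a b := by
  have hmono : c < a → c < b := fun hca => hca.trans_le hab
  rw [Set.mem_Ico, ← not_lt]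
  tauto

theorem not_lt_iff_lt_iff_mem_Ioc (hab : a ≤ b) : ¬(a < c ↔ b < c) ↔ c ∈ Set.Ioc a b := by
  have hmono : b < c → a < c := hab.trans_lt
  rw [Set.mem_Ioc, ← not_lt (a := b)]
  tauto

end LinearOrder

section Aperm

variable {σ : Equiv.Perm ℕ} {i j ℓ r s r' s' : ℕ}

theorem aperm_eq_one_iff : Aperm σ r s = 1 ↔ σ.symm s < σ.symm r := by
  simp [Aperm]

theorem aperm_eq_neg_one_iff : Aperm σ r s = -1 ↔ σ.symm r ≤ σ.symm s := by
  simp [Aperm]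

theorem aperm_eq_aperm_iff :
    Aperm σ r s = Aperm σ r' s' ↔ (σ.symm s < σ.symm r ↔ σ.symm s' < σ.symm r') := by
  by_cases h : σ.symm s < σ.symm r <;> by_cases h' : σ.symm s' < σ.symm r' <;>
    simp [Aperm, h, h']

theorem aperm_ne_aperm_left_iff (hij : σ.symm i ≤ σ.symm j) (hℓ : ℓ ≠ i) :
    Aperm σ j ℓ ≠ Aperm σ i ℓ ↔ σ.symm i < σ.symm ℓ ∧ σ.symm ℓ < σ.symm j := by
  have hne : σ.symm i ≠ σ.symm ℓ := σ.symm.injective.ne hℓ.symm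
  rw [Ne, aperm_eq_aperm_iff, not_lt_iff_lt_iff_mem_Ico hij, Set.mem_Ico, hne.le_iff_lt]

theorem aperm_ne_aperm_right_iff (hij : σ.symm i ≤ σ.symm j) (hℓ : ℓ ≠ j) :
    Aperm σ ℓ i ≠ Aperm σ ℓ j ↔ σ.symm i < σ.symm ℓ ∧ σ.symm ℓ < σ.symm j := by
  have hne : σ.symm ℓ ≠ σ.symm j := σ.symm.injective.ne hℓ
  rw [Ne, aperm_eq_aperm_iff, not_lt_iff_lt_iff_mem_Ioc hij, Set.mem_Ioc, hne.le_iff_lt]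

end Aperm

theorem stmt12_general (σ : Equiv.Perm ℕ) (i j : ℕ) :
    (Aperm σ j i = 1 →
      (∀ ℓ ≠ i, (Aperm σ j ℓ ≠ Aperm σ i ℓ ↔
        σ.symm i < σ.symm ℓ ∧ σ.symm ℓ < σ.symm j)) ∧
      (∀ ℓ ≠ j, (Aperm σ ℓ i ≠ Aperm σ ℓ j ↔
        σ.symm i < σ.symm ℓ ∧ σ.symm ℓ < σ.symm j))) ∧
    (Aperm σ j i = -1 →
      (∀ ℓ ≠ j, (Aperm σ j ℓ ≠ Aperm σ i ℓ ↔
        σ.symm j < σ.symm ℓ ∧ σ.symm ℓ < σ.symm i)) ∧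
      (∀ ℓ ≠ i, (Aperm σ ℓ i ≠ Aperm σ ℓ j ↔
        σ.symm j < σ.symm ℓ ∧ σ.symm ℓ < σ.symm i))) := by
  refine ⟨fun hpos => ?_, fun hneg => ?_⟩
  · have hij : σ.symm i ≤ σ.symm j := (aperm_eq_one_iff.1 hpos).le
    exact ⟨fun ℓ hℓ => aperm_ne_aperm_left_iff hij hℓ,
      fun ℓ hℓ => aperm_ne_aperm_right_iff hij hℓ⟩
  · have hji : σ.symm j ≤ σ.symm i := aperm_eq_neg_one_iff.1 hneg
    exact ⟨fun ℓ hℓ => ne_comm.trans (aperm_ne_aperm_left_iff hji hℓ),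
      fun ℓ hℓ => ne_comm.trans (aperm_ne_aperm_right_iff hji hℓ)⟩

/-- comparison of the orientations `A_σ(k+1,ℓ)` vs `A_σ(k,ℓ)` and
`A_σ(ℓ,k)` vs `A_σ(ℓ,k+1)`, according to the sign of `A_σ(k+1,k)`. -/
theorem stmt12 (n : ℕ) (hn : 2 ≤ n) (σ : Equiv.Perm ℕ)
    (hσ : ∀ i ∉ Set.Icc 1 n, σ i = i) (k : ℕ) (hk1 : 1 ≤ k) (hk2 : k ≤ n - 1) :
    (Aperm σ (k + 1) k = 1 →
      (∀ ℓ : ℕ, 1 ≤ ℓ → ℓ < k →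
        (Aperm σ (k + 1) ℓ ≠ Aperm σ k ℓ ↔
          σ.symm k < σ.symm ℓ ∧ σ.symm ℓ < σ.symm (k + 1))) ∧
      (∀ ℓ : ℕ, k + 2 ≤ ℓ → ℓ ≤ n →
        (Aperm σ ℓ k ≠ Aperm σ ℓ (k + 1) ↔
          σ.symm k < σ.symm ℓ ∧ σ.symm ℓ < σ.symm (k + 1)))) ∧
    (Aperm σ (k + 1) k = -1 →
      (∀ ℓ : ℕ, 1 ≤ ℓ → ℓ < k →
        (Aperm σ (k + 1) ℓ ≠ Aperm σ k ℓ ↔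
          σ.symm (k + 1) < σ.symm ℓ ∧ σ.symm ℓ < σ.symm k)) ∧
      (∀ ℓ : ℕ, k + 2 ≤ ℓ → ℓ ≤ n →
        (Aperm σ ℓ k ≠ Aperm σ ℓ (k + 1) ↔
          σ.symm (k + 1) < σ.symm ℓ ∧ σ.symm ℓ < σ.symm k))) := by
  refine (stmt12_general σ k (k + 1)).imp (fun h hA => ?_) (fun h hA => ?_) <;>
    exact (h hA).imp (fun hleft ℓ _ _ => hleft ℓ (by lia)) (fun hright ℓ _ _ => hright ℓ (by lia))
end

section
/- For every σ ∈ S_n and 1 ≤ k ≤ n−1: M_k(σ) + m_k(σ) + A_σ(k+1,k) = σ^{-1}(k+1) − σ^{-1}(k), as an identity of integers (where σ^{-1}(k), σ^{-1}(k+1) ∈ {1,…,n}). -/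
/-- `M_k(σ) = A_σ(k+1,k) · #{ℓ : k+2 ≤ ℓ ≤ n, A_σ(ℓ,k) ≠ A_σ(ℓ,k+1)}`. -/
def Mk (n : ℕ) (σ : Equiv.Perm ℕ) (k : ℕ) : ℤ :=
  Aperm σ (k + 1) k *
    ((Finset.Icc (k + 2) n).filter (fun ℓ => Aperm σ ℓ k ≠ Aperm σ ℓ (k + 1))).card

/-- `m_k(σ) = A_σ(k+1,k) · #{ℓ : 1 ≤ ℓ ≤ k-1, A_σ(k+1,ℓ) ≠ A_σ(k,ℓ)}`. -/
def mk' (n : ℕ) (σ : Equiv.Perm ℕ) (k : ℕ) : ℤ :=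
  Aperm σ (k + 1) k *
    ((Finset.Icc 1 (k - 1)).filter (fun ℓ => Aperm σ (k + 1) ℓ ≠ Aperm σ k ℓ)).card

/-!
Write `σ` as the word `σ(1) σ(2) …`. For `ℓ ∉ {k, k + 1}`, the inequality
`A_σ(ℓ,k) ≠ A_σ(ℓ,k+1)`, which by antisymmetry of `A_σ` is also `A_σ(k+1,ℓ) ≠ A_σ(k,ℓ)`, says that
`ℓ` stands between `k` and `k + 1` in this word. Hence `M_k` and `m_k` count, with the sign
`A_σ(k+1,k)`, the letters between `k` and `k + 1` that are larger than `k + 1` and smaller than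
`k`, respectively; together these are all `|σ⁻¹(k+1) - σ⁻¹(k)| - 1` letters between the two.
-/

open Finset

theorem perm_apply_mem_iff_of_forall_notMem {α : Type*} {τ : Equiv.Perm α} {s : Set α}
    (h : ∀ i ∉ s, τ i = i) {i : α} : τ i ∈ s ↔ i ∈ s := by
  refine not_iff_not.1 ⟨fun hi ↦ ?_, fun hi ↦ by rwa [h i hi]⟩
  rwa [τ.injective (h _ hi)] at hi

section LettersBetween

variable {σ : Equiv.Perm ℕ}

/-- The set of letters standing strictly between the letters `a` and `b` in the word
`σ(0) σ(1) σ(2) …`, whichever of the two comes first. It is the set that `M_k` and `m_k` count,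
for `a = k` and `b = k + 1`. -/
def lettersBetween (σ : Equiv.Perm ℕ) (a b : ℕ) : Finset ℕ :=
  (Ioo (min (σ.symm a) (σ.symm b)) (max (σ.symm a) (σ.symm b))).map σ.toEmbedding

theorem mem_lettersBetween {a b ℓ : ℕ} :
    ℓ ∈ lettersBetween σ a b ↔
      min (σ.symm a) (σ.symm b) < σ.symm ℓ ∧ σ.symm ℓ < max (σ.symm a) (σ.symm b) := by
  rw [lettersBetween, mem_map_equiv, mem_Ioo]

theorem left_notMem_lettersBetween {a b : ℕ} : a ∉ lettersBetween σ a b := by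
  rw [mem_lettersBetween]
  omega

theorem right_notMem_lettersBetween {a b : ℕ} : b ∉ lettersBetween σ a b := by
  rw [mem_lettersBetween]
  omega

theorem lettersBetween_subset_Icc {m n a b : ℕ} (hσ : ∀ i ∉ Set.Icc m n, σ i = i)
    (ha : a ∈ Set.Icc m n) (hb : b ∈ Set.Icc m n) : lettersBetween σ a b ⊆ Icc m n := by
  have symm_mem_iff {i : ℕ} : σ.symm i ∈ Set.Icc m n ↔ i ∈ Set.Icc m n := by
    rw [← perm_apply_mem_iff_of_forall_notMem hσ, σ.apply_symm_apply]
  intro ℓ hℓ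
  rw [mem_lettersBetween] at hℓ
  rw [← symm_mem_iff, Set.mem_Icc] at ha hb
  rw [← mem_coe, coe_Icc, ← symm_mem_iff, Set.mem_Icc]
  omega

theorem Aperm_swap {r s : ℕ} (h : r ≠ s) : Aperm σ s r = -Aperm σ r s := by
  have hpos : σ.symm r ≠ σ.symm s := σ.symm.injective.ne h
  unfold Aperm
  split_ifs <;> omega

theorem mem_lettersBetween_iff_Aperm_ne {a b ℓ : ℕ} (ha : ℓ ≠ a) (hb : ℓ ≠ b) :
    ℓ ∈ lettersBetween σ a b ↔ Aperm σ ℓ a ≠ Aperm σ ℓ b := by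
  have hposa : σ.symm ℓ ≠ σ.symm a := σ.symm.injective.ne ha
  have hposb : σ.symm ℓ ≠ σ.symm b := σ.symm.injective.ne hb
  rw [mem_lettersBetween]
  unfold Aperm
  split_ifs <;> omega

theorem Aperm_mul_card_lettersBetween_add_one {a b : ℕ} (h : a ≠ b) :
    Aperm σ b a * (#(lettersBetween σ a b) + 1) = (σ.symm b : ℤ) - σ.symm a := by
  have hpos : σ.symm a ≠ σ.symm b := σ.symm.injective.ne h
  rw [lettersBetween, card_map, Nat.card_Ioo, Aperm]
  split_ifs <;> omega

theorem Mk_eq_Aperm_mul_card {n k : ℕ} (h : lettersBetween σ k (k + 1) ⊆ Iic n) :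
    Mk n σ k = Aperm σ (k + 1) k * #{ℓ ∈ lettersBetween σ k (k + 1) | k < ℓ} := by
  rw [Mk]
  congr 3
  ext ℓ
  simp only [mem_filter, mem_Icc]
  constructor
  · rintro ⟨⟨hkℓ, -⟩, hne⟩
    exact ⟨(mem_lettersBetween_iff_Aperm_ne (by omega) (by omega)).2 hne, by omega⟩
  · rintro ⟨hℓ, hkℓ⟩
    have hℓsucc : ℓ ≠ k + 1 := ne_of_mem_of_not_mem hℓ right_notMem_lettersBetween
    have hℓn : ℓ ≤ n := mem_Iic.1 (h hℓ)
    exact ⟨by omega, (mem_lettersBetween_iff_Aperm_ne hkℓ.ne' hℓsucc).1 hℓ⟩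

theorem mk'_eq_Aperm_mul_card {n k : ℕ} (h : 0 ∉ lettersBetween σ k (k + 1)) :
    mk' n σ k = Aperm σ (k + 1) k * #{ℓ ∈ lettersBetween σ k (k + 1) | ¬k < ℓ} := by
  have mem_iff {ℓ : ℕ} (hk : ℓ ≠ k) (hsucc : ℓ ≠ k + 1) :
      ℓ ∈ lettersBetween σ k (k + 1) ↔ Aperm σ (k + 1) ℓ ≠ Aperm σ k ℓ := by
    rw [mem_lettersBetween_iff_Aperm_ne hk hsucc, Aperm_swap hk, Aperm_swap hsucc, ne_comm,
      neg_injective.ne_iff]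
  rw [mk']
  congr 3
  ext ℓ
  simp only [mem_filter, mem_Icc]
  constructor
  · rintro ⟨⟨hℓ1, hℓk⟩, hne⟩
    exact ⟨(mem_iff (by omega) (by omega)).2 hne, by omega⟩
  · rintro ⟨hℓ, hkℓ⟩
    have hℓk : ℓ ≠ k := ne_of_mem_of_not_mem hℓ left_notMem_lettersBetween
    have hℓ0 : ℓ ≠ 0 := ne_of_mem_of_not_mem hℓ h
    exact ⟨by omega, (mem_iff hℓk (by omega)).1 hℓ⟩

theorem stmt14_general {n k : ℕ} (h : lettersBetween σ k (k + 1) ⊆ Icc 1 n) :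
    Mk n σ k + mk' n σ k + Aperm σ (k + 1) k = (σ.symm (k + 1) : ℤ) - (σ.symm k : ℤ) := by
  have hle : lettersBetween σ k (k + 1) ⊆ Iic n := h.trans Icc_subset_Iic_self
  have hzero : 0 ∉ lettersBetween σ k (k + 1) := fun h0 ↦ by simpa using h h0
  rw [Mk_eq_Aperm_mul_card hle, mk'_eq_Aperm_mul_card hzero,
    ← Aperm_mul_card_lettersBetween_add_one k.succ_ne_self.symm,
    ← card_filter_add_card_filter_not (s := lettersBetween σ k (k + 1)) (k < ·)]
  push_cast
  ring

end LettersBetween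

/-- `M_k(σ) + m_k(σ) + A_σ(k+1,k) = σ⁻¹(k+1) - σ⁻¹(k)` in `ℤ`. -/
theorem stmt14 (n : ℕ) (hn : 2 ≤ n) (σ : Equiv.Perm ℕ)
    (hσ : ∀ i ∉ Set.Icc 1 n, σ i = i) (k : ℕ) (hk1 : 1 ≤ k) (hk2 : k ≤ n - 1) :
    Mk n σ k + mk' n σ k + Aperm σ (k + 1) k =
      (σ.symm (k + 1) : ℤ) - (σ.symm k : ℤ) :=
  stmt14_general (lettersBetween_subset_Icc hσ ⟨hk1, by omega⟩ ⟨by omega, by omega⟩)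
end

section
/- Let X ∈ ℂ^n, σ ∈ S_n, and T(Y) = T_σ(X) = (y_{k,i}). Then for every 1 ≤ k ≤ n−1: y_{k+1,k+1} − y_{k+1,k} = y_{n,k+1} − y_{n,k} + M_k(σ). -/
/-!
Unrolling the recursion, `y_{m,i} = y_{n,i} + ∑_{m < ℓ ≤ n} (1 - A_σ(ℓ,i))/2`, so the difference of
two columns changes between rows `m` and `n` by half the sum of `A_σ(ℓ,i) - A_σ(ℓ,j)`. A term of
this sum is nonzero only when `ℓ` lies between `i` and `j` in the word of `σ`, and then, by
transitivity of the order of positions, it equals `2 A_σ(j,i)`, whatever `ℓ` is.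
-/

section Orientation

variable {σ : Equiv.Perm ℕ}

theorem aperm_eq_neg_of_ne {q r s t : ℕ} (h : Aperm σ q r ≠ Aperm σ s t) :
    Aperm σ s t = -Aperm σ q r := by
  unfold Aperm at *
  split_ifs at * <;> simp_all

theorem aperm_eq_of_aperm_ne {i j ℓ : ℕ} (h : Aperm σ ℓ i ≠ Aperm σ ℓ j) :
    Aperm σ ℓ i = Aperm σ j i := by
  by_cases hi : σ.symm i < σ.symm ℓ
  · have hj : σ.symm ℓ ≤ σ.symm j := by
      by_contra! hj
      simp [Aperm, hi, hj] at h
    simp [Aperm, hi, hi.trans_le hj]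
  · have hj : σ.symm j < σ.symm ℓ := by
      by_contra hj
      simp [Aperm, hi, hj] at h
    have hji : σ.symm j < σ.symm i := hj.trans_le (not_lt.mp hi)
    simp [Aperm, hi, hji.not_gt]

variable (σ)

theorem aperm_sub_aperm (i j ℓ : ℕ) :
    Aperm σ ℓ i - Aperm σ ℓ j = if Aperm σ ℓ i ≠ Aperm σ ℓ j then 2 * Aperm σ j i else 0 := by
  split_ifs with h
  · rw [aperm_eq_neg_of_ne h, aperm_eq_of_aperm_ne h]
    ring
  · exact sub_eq_zero.mpr (not_not.mp h)

theorem sum_aperm_sub_aperm (s : Finset ℕ) (i j : ℕ) :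
    ∑ ℓ ∈ s, (Aperm σ ℓ i - Aperm σ ℓ j) =
      2 * (Aperm σ j i * (s.filter fun ℓ => Aperm σ ℓ i ≠ Aperm σ ℓ j).card) := by
  simp only [aperm_sub_aperm σ i j]
  rw [← Finset.sum_filter, Finset.sum_const, nsmul_eq_mul]
  ring

end Orientation

section Tableau

variable {n m : ℕ} (σ : Equiv.Perm ℕ) (x : ℕ → ℂ)

theorem tab_of_lt_s15 (hm : m < n) (i : ℕ) :
    tab n σ x m i = tab n σ x (m + 1) i + (1 - (Aperm σ (m + 1) i : ℂ)) / 2 := by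
  rw [tab, dif_neg hm.not_ge]

theorem tab_eq_tab_add_sum (hm : m ≤ n) (i : ℕ) :
    tab n σ x m i =
      tab n σ x n i + ∑ ℓ ∈ Finset.Icc (m + 1) n, (1 - (Aperm σ ℓ i : ℂ)) / 2 := by
  induction hm using Nat.decreasingInduction with
  | self => simp
  | of_succ m hm ih =>
    rw [tab_of_lt_s15 σ x hm, ih, ← Finset.insert_Icc_add_one_left_eq_Icc (show m + 1 ≤ n from hm),
      Finset.sum_insert (by simp)]
    ring

theorem stmt15_general (hm : m ≤ n) (i j : ℕ) :
    tab n σ x m j - tab n σ x m i = tab n σ x n j - tab n σ x n i +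
      ((Aperm σ j i * ((Finset.Icc (m + 1) n).filter
        fun ℓ => Aperm σ ℓ i ≠ Aperm σ ℓ j).card : ℤ) : ℂ) := by
  have half_sum :
      ∑ ℓ ∈ Finset.Icc (m + 1) n, (1 - (Aperm σ ℓ j : ℂ)) / 2 -
          ∑ ℓ ∈ Finset.Icc (m + 1) n, (1 - (Aperm σ ℓ i : ℂ)) / 2 =
        ((Aperm σ j i * ((Finset.Icc (m + 1) n).filter
          fun ℓ => Aperm σ ℓ i ≠ Aperm σ ℓ j).card : ℤ) : ℂ) := by
    calc
      _ = ∑ ℓ ∈ Finset.Icc (m + 1) n, ((Aperm σ ℓ i - Aperm σ ℓ j : ℤ) : ℂ) / 2 := by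
        rw [← Finset.sum_sub_distrib]
        exact Finset.sum_congr rfl fun ℓ _ => by push_cast; ring
      _ = ((∑ ℓ ∈ Finset.Icc (m + 1) n, (Aperm σ ℓ i - Aperm σ ℓ j) : ℤ) : ℂ) / 2 := by
        rw [Int.cast_sum, Finset.sum_div]
      _ = _ := by
        rw [sum_aperm_sub_aperm, Int.cast_mul, Int.cast_ofNat,
          mul_div_cancel_left₀ _ two_ne_zero]
  rw [tab_eq_tab_add_sum σ x hm i, tab_eq_tab_add_sum σ x hm j, ← half_sum]
  ring

end Tableau

/-- `y_{k+1,k+1} - y_{k+1,k} = y_{n,k+1} - y_{n,k} + M_k(σ)` for the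
tableau `T_σ(X)`. -/
theorem stmt15 (n : ℕ) (hn : 2 ≤ n) (σ : Equiv.Perm ℕ)
    (hσ : ∀ i ∉ Set.Icc 1 n, σ i = i) (x : ℕ → ℂ) (k : ℕ)
    (hk1 : 1 ≤ k) (hk2 : k ≤ n - 1) :
    tab n σ x (k + 1) (k + 1) - tab n σ x (k + 1) k =
      tab n σ x n (k + 1) - tab n σ x n k + (Mk n σ k : ℂ) :=
  stmt15_general σ x (show k + 1 ≤ n by omega) k (k + 1)
end
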